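/- Let p ∈ [1,∞) and suppose the probe set is Ψ̃ := {ψ_g : g ∈ G} with ψ_g := |g|^{p−1}·sign(g)/‖g‖_p^{p−1} (so that ‖ψ_g‖_q = 1 and ∫ψ_g g = ‖g‖_p for every g ∈ G). Run the aggregation procedure of the context with δ = ε and κ = √(2 ln(N²/ε)). Then E‖f̂ − f‖_p ≤ 3·min_{i∈I_N} ‖f − f_i‖_p + 2 Q₁(p)·ε·√(2 ln(N²/ε)) + 2Lε, where Q₁(p) = 1 for p ∈ [1,2], and Q₁(p) = max_{i∈I_N, i≠i*} (‖f_{i*} − f_i‖_{2p−2}/‖f_{i*} − f_i‖_p)^{p−1} for p ∈ (2,∞). -/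

import Mathlib

open MeasureTheory
open scoped ENNReal

/-- Lebesgue measure restricted to the unit cube `[0,1]^d`. -/
noncomputable def cubeMeasure (d : ℕ) : Measure (Fin d → ℝ) :=
  volume.restrict (Set.Icc 0 1)

/-- The real-valued `L^r` norm on the unit cube. -/
noncomputable def Lnorm {d : ℕ} (r : ℝ≥0∞) (g : (Fin d → ℝ) → ℝ) : ℝ :=
  (eLpNorm g r (cubeMeasure d)).toReal

/-!
The `L^q`-normalized dual `ψ` of `F j - F l` turns `‖F j - F l‖` into the linear functional
`g ↦ ∫ ψ g` of norm one. As long as every noise term stays below its threshold, the criterion of a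
candidate is therefore at most its distance to `f`, and evaluating it at the probe that separates
the selected candidate from a best one gives, by the triangle inequality, at most three times the
smallest distance plus twice the threshold of that probe. On the exceptional event the error is at
most `2L`, and this event has probability at most `ε`: antisymmetry of the noise turns the two-sided
tails over the pairs into one-sided tails over ordered pairs, of which there are fewer than `N²`.
-/

open ProbabilityTheory
open scoped NNReal

lemma measurable_real_sign : Measurable Real.sign :=
  Measurable.ite measurableSet_Iio measurable_const
    (Measurable.ite measurableSet_Ioi measurable_const measurable_const)

lemma real_sign_mul_self (x : ℝ) : Real.sign x * x = |x| := by
  rcases lt_trichotomy x 0 with hx | rfl | hx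
  · simp [Real.sign_of_neg hx, abs_of_neg hx]
  · simp
  · simp [Real.sign_of_pos hx, abs_of_pos hx]

lemma abs_real_sign_of_ne_zero {x : ℝ} (hx : x ≠ 0) : |Real.sign x| = 1 := by
  rcases Real.sign_apply_eq_of_ne_zero x hx with h | h <;> simp [h]

lemma abs_real_sign_le_one (x : ℝ) : |Real.sign x| ≤ 1 := by
  rcases eq_or_ne x 0 with rfl | hx
  · simp
  · exact (abs_real_sign_of_ne_zero hx).le

section LpDual

variable {α : Type*} {mα : MeasurableSpace α} {μ : Measure α} {p q r : ℝ≥0∞} {g : α → ℝ}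

/-- The normalized dual `|g|^{p-1} sign g / ‖g‖_p^{p-1}` of `g` in `L^p(μ)`: integrating it against
`g` gives `‖g‖_p`, and its norm in the conjugate space is one. For `p = 1` it is `sign g`, which
vanishes where `g` does although `0 ^ 0 = 1`. -/
noncomputable def lpDual (p : ℝ≥0∞) (μ : Measure α) (g : α → ℝ) (t : α) : ℝ :=
  |g t| ^ (p.toReal - 1) * Real.sign (g t) / (eLpNorm g p μ).toReal ^ (p.toReal - 1)

lemma lpDual_one : lpDual 1 μ g = fun t ↦ Real.sign (g t) := by
  ext t
  simp [lpDual]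

lemma lpDual_neg : lpDual p μ (-g) = -lpDual p μ g := by
  ext t
  simp [lpDual, Real.sign_neg, neg_div]

lemma eLpNorm_lpDual_sub_comm (f g : α → ℝ) (r : ℝ≥0∞) :
    eLpNorm (lpDual p μ (f - g)) r μ = eLpNorm (lpDual p μ (g - f)) r μ := by
  rw [← neg_sub, lpDual_neg, eLpNorm_neg]

lemma aestronglyMeasurable_lpDual (hg : AEStronglyMeasurable g μ) :
    AEStronglyMeasurable (lpDual p μ g) μ := by
  have hsign : AEMeasurable (fun t ↦ Real.sign (g t)) μ :=
    measurable_real_sign.comp_aemeasurable hg.aemeasurable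
  have hpow : AEMeasurable (fun t ↦ |g t| ^ (p.toReal - 1)) μ := by
    simpa using hg.norm.aemeasurable.pow_const (p.toReal - 1)
  exact ((hpow.mul hsign).div_const _).aestronglyMeasurable

lemma abs_lpDual (hp : p.toReal ≠ 1) (t : α) :
    |lpDual p μ g t| = |g t| ^ (p.toReal - 1) / (eLpNorm g p μ).toReal ^ (p.toReal - 1) := by
  rw [lpDual, abs_div, abs_mul, abs_of_nonneg (a := _ ^ _) (by positivity),
    abs_of_nonneg (a := (eLpNorm g p μ).toReal ^ _) (by positivity)]
  rcases eq_or_ne (g t) 0 with ht | ht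
  · simp [ht, Real.zero_rpow (sub_ne_zero.2 hp)]
  · rw [abs_real_sign_of_ne_zero ht, mul_one]

lemma lpDual_mul_self (hp : p.toReal ≠ 0) (t : α) :
    lpDual p μ g t * g t = |g t| ^ p.toReal / (eLpNorm g p μ).toReal ^ (p.toReal - 1) := by
  rw [lpDual, div_mul_eq_mul_div, mul_assoc, real_sign_mul_self]
  rcases eq_or_ne (g t) 0 with ht | ht
  · simp [ht, Real.zero_rpow hp]
  · rw [Real.rpow_sub_one (abs_ne_zero.2 ht), div_mul_cancel₀ _ (abs_ne_zero.2 ht)]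

lemma integral_lpDual_mul_self (hp₀ : p ≠ 0) (hp : p ≠ ∞) (hg : MemLp g p μ) :
    ∫ t, lpDual p μ g t * g t ∂μ = (eLpNorm g p μ).toReal := by
  have hp' : p.toReal ≠ 0 := (ENNReal.toReal_pos hp₀ hp).ne'
  have hpow : ∫ t, |g t| ^ p.toReal ∂μ = (eLpNorm g p μ).toReal ^ p.toReal := by
    rw [toReal_eLpNorm hg.1, lpNorm_eq_integral_norm_rpow_toReal hp₀ hp hg.1,
      Real.rpow_inv_rpow (integral_nonneg fun _ ↦ by positivity) hp']
    simp
  simp_rw [lpDual_mul_self hp', integral_div, hpow]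
  rcases ENNReal.toReal_nonneg (a := eLpNorm g p μ).eq_or_lt with hc | hc
  · simp [← hc, Real.zero_rpow hp']
  · rw [← Real.rpow_sub hc, sub_sub_cancel, Real.rpow_one]

lemma eLpNorm_lpDual (hp₁ : 1 < p) (hp : p ≠ ∞) (hg : eLpNorm g p μ ≠ ∞)
    (hg₀ : eLpNorm g p μ ≠ 0) (r : ℝ≥0∞) :
    eLpNorm (lpDual p μ g) r μ =
      (eLpNorm g (r * (p - 1)) μ / eLpNorm g p μ) ^ (p.toReal - 1) := by
  have hs : p.toReal - 1 = (p - 1).toReal := by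
    rw [ENNReal.toReal_sub_of_le hp₁.le hp, ENNReal.toReal_one]
  have hs₀ : 0 < p.toReal - 1 := by
    rw [hs]
    exact ENNReal.toReal_pos (tsub_pos_of_lt hp₁).ne' (ENNReal.sub_ne_top hp)
  have hc : 0 < (eLpNorm g p μ).toReal := ENNReal.toReal_pos hg₀ hg
  have hnorm : eLpNorm (lpDual p μ g) r μ =
      eLpNorm (((eLpNorm g p μ).toReal ^ (p.toReal - 1))⁻¹ • fun t ↦ ‖g t‖ ^ (p.toReal - 1)) r μ :=
    eLpNorm_congr_norm_ae <| .of_forall fun t ↦ by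
      rw [Real.norm_eq_abs, abs_lpDual (sub_pos.1 hs₀).ne', Pi.smul_apply, smul_eq_mul,
        Real.norm_of_nonneg (by positivity), Real.norm_eq_abs, div_eq_inv_mul]
  rw [hnorm, eLpNorm_const_smul, eLpNorm_norm_rpow _ hs₀, Real.enorm_eq_ofReal (by positivity),
    ENNReal.ofReal_inv_of_pos (by positivity), ← ENNReal.ofReal_rpow_of_pos hc,
    ENNReal.ofReal_toReal hg, ENNReal.div_rpow_of_nonneg _ _ hs₀.le, ENNReal.div_eq_inv_mul, hs,
    ENNReal.ofReal_toReal (ENNReal.sub_ne_top hp)]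

lemma eLpNorm_lpDual_le_one [p.HolderConjugate q] (hp : p ≠ ∞) (hg : eLpNorm g p μ ≠ ∞)
    (hg₀ : eLpNorm g p μ ≠ 0) : eLpNorm (lpDual p μ g) q μ ≤ 1 := by
  rcases (ENNReal.HolderConjugate.one_le p q).eq_or_lt with rfl | hp₁
  · have hq : q = ∞ := (ENNReal.HolderConjugate.eq_top_iff_eq_one q 1).2 rfl
    have hsign : ∀ᵐ t ∂μ, ‖lpDual 1 μ g t‖ ≤ 1 :=
      .of_forall fun t ↦ by simpa [lpDual_one] using abs_real_sign_le_one (g t)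
    simpa [hq] using eLpNormEssSup_le_of_ae_bound hsign
  · have hqp : q * (p - 1) = p := by
      rw [← inv_inv q, ← ENNReal.HolderConjugate.sub_one_mul_inv p q hp, mul_comm,
        ENNReal.mul_inv (.inl (tsub_pos_of_lt hp₁).ne') (.inl (ENNReal.sub_ne_top hp)), ← mul_assoc,
        ENNReal.mul_inv_cancel (tsub_pos_of_lt hp₁).ne' (ENNReal.sub_ne_top hp), one_mul, inv_inv]
    rw [eLpNorm_lpDual hp₁ hp hg hg₀, hqp, ENNReal.div_self hg₀ hg, ENNReal.one_rpow]

lemma eLpNorm_two_lpDual_le_one [IsProbabilityMeasure μ] [p.HolderConjugate q] (hp : p ≤ 2)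
    (hg : MemLp g p μ) (hg₀ : eLpNorm g p μ ≠ 0) : eLpNorm (lpDual p μ g) 2 μ ≤ 1 := by
  have hq : 2 ≤ q := by
    have hinv : q⁻¹ ≤ 2⁻¹ := by
      rw [← ENNReal.HolderConjugate.one_sub_inv p q, ← ENNReal.one_sub_inv_two]
      exact tsub_le_tsub_left (ENNReal.inv_le_inv.2 hp) 1
    exact ENNReal.inv_le_inv.1 hinv
  calc eLpNorm (lpDual p μ g) 2 μ ≤ eLpNorm (lpDual p μ g) q μ :=
        eLpNorm_le_eLpNorm_of_exponent_le hq (aestronglyMeasurable_lpDual hg.1)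
    _ ≤ 1 := eLpNorm_lpDual_le_one (hp.trans_lt (by simp)).ne hg.2.ne hg₀

lemma toReal_eLpNorm_two_lpDual (hp₁ : 1 < p) (hp : p ≠ ∞) (hg : eLpNorm g p μ ≠ ∞)
    (hg₀ : eLpNorm g p μ ≠ 0) :
    (eLpNorm (lpDual p μ g) 2 μ).toReal =
      ((eLpNorm g (2 * p - 2) μ).toReal / (eLpNorm g p μ).toReal) ^ (p.toReal - 1) := by
  rw [eLpNorm_lpDual hp₁ hp hg hg₀, ENNReal.mul_sub (by simp), mul_one, ← ENNReal.toReal_rpow,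
    ENNReal.toReal_div]

lemma toReal_eLpNorm_two_lpDual_le [IsProbabilityMeasure μ] [p.HolderConjugate q] (hp : p ≠ ∞)
    (hg : MemLp g p μ) (hg₀ : eLpNorm g p μ ≠ 0) {Q : ℝ} (hQ₁ : p ≤ 2 → 1 ≤ Q)
    (hQ₂ : 2 < p →
      ((eLpNorm g (2 * p - 2) μ).toReal / (eLpNorm g p μ).toReal) ^ (p.toReal - 1) ≤ Q) :
    (eLpNorm (lpDual p μ g) 2 μ).toReal ≤ Q := by
  rcases le_or_gt p 2 with hp₂ | hp₂
  · exact (ENNReal.toReal_mono ENNReal.one_ne_top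
      (eLpNorm_two_lpDual_le_one (q := q) hp₂ hg hg₀)).trans (hQ₁ hp₂)
  · rw [toReal_eLpNorm_two_lpDual (ENNReal.one_lt_two.trans hp₂) hp hg.2.ne hg₀]
    exact hQ₂ hp₂

lemma eLpNorm_two_lpDual_ne_top [IsProbabilityMeasure μ] [p.HolderConjugate q] (hp : p ≠ ∞)
    (hg : MemLp g p μ) (hg₀ : eLpNorm g p μ ≠ 0) (hg₂ : eLpNorm g (2 * p - 2) μ ≠ ∞) :
    eLpNorm (lpDual p μ g) 2 μ ≠ ∞ := by
  rcases (ENNReal.HolderConjugate.one_le p q).eq_or_lt with hp₁ | hp₁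
  · exact ((eLpNorm_two_lpDual_le_one (q := q) (by simp [← hp₁]) hg hg₀).trans_lt (by simp)).ne
  · have hs : 0 ≤ p.toReal - 1 := by
      simpa using (ENNReal.toReal_le_toReal ENNReal.one_ne_top hp).2 hp₁.le
    rw [eLpNorm_lpDual hp₁ hp hg.2.ne hg₀, ENNReal.mul_sub (by simp), mul_one]
    exact ENNReal.rpow_ne_top_of_nonneg hs (ENNReal.div_ne_top hg₂ hg₀)

end LpDual

section LpFunctional

variable {α : Type*} {mα : MeasurableSpace α} {μ : Measure α} {p q : ℝ≥0∞}

lemma norm_lpPairing_apply_le {𝕜 E F G : Type*} [RCLike 𝕜] [NormedAddCommGroup E]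
    [NormedAddCommGroup F] [NormedAddCommGroup G] [NormedSpace 𝕜 E] [NormedSpace 𝕜 F]
    [NormedSpace 𝕜 G] [NormedSpace ℝ G] [SMulCommClass ℝ 𝕜 G] [CompleteSpace G]
    [Fact (1 ≤ p)] [Fact (1 ≤ q)] [p.HolderConjugate q] (B : E →L[𝕜] F →L[𝕜] G) (f : Lp E p μ) :
    ‖B.lpPairing μ p q f‖ ≤ ‖B‖ * ‖f‖ := by
  refine ContinuousLinearMap.opNorm_le_bound _ (by positivity) fun g ↦ ?_
  calc ‖B.lpPairing μ p q f g‖ ≤ ‖B.holder 1 f g‖ := by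
        simpa [ContinuousLinearMap.lpPairing, ← L1.integral_eq'] using
          L1.norm_integral_le (B.holder 1 f g)
    _ ≤ ‖B‖ * ‖f‖ * ‖g‖ := B.norm_holder_apply_apply_le f g

lemma lpPairing_mul_toLp_toLp [Fact (1 ≤ p)] [Fact (1 ≤ q)] [q.HolderConjugate p]
    {ψ g : α → ℝ} (hψ : MemLp ψ q μ) (hg : MemLp g p μ) :
    (ContinuousLinearMap.mul ℝ ℝ).lpPairing μ q p (hψ.toLp ψ) (hg.toLp g) = ∫ t, ψ t * g t ∂μ := by
  rw [ContinuousLinearMap.lpPairing_eq_integral]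
  refine integral_congr_ae ?_
  filter_upwards [hψ.coeFn_toLp, hg.coeFn_toLp] with t hψt hgt
  simp [hψt, hgt]

lemma norm_lpPairing_mul_apply_le [Fact (1 ≤ p)] [Fact (1 ≤ q)] [q.HolderConjugate p]
    (ψ : Lp ℝ q μ) (g : Lp ℝ p μ) :
    ‖(ContinuousLinearMap.mul ℝ ℝ).lpPairing μ q p ψ g‖ ≤ ‖ψ‖ * ‖g‖ := by
  refine ((ContinuousLinearMap.mul ℝ ℝ).lpPairing μ q p ψ).le_of_opNorm_le ?_ g
  calc ‖(ContinuousLinearMap.mul ℝ ℝ).lpPairing μ q p ψ‖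
      ≤ ‖ContinuousLinearMap.mul ℝ ℝ‖ * ‖ψ‖ := norm_lpPairing_apply_le _ ψ
    _ ≤ 1 * ‖ψ‖ := by gcongr; exact ContinuousLinearMap.opNorm_mul_le ℝ ℝ
    _ = ‖ψ‖ := one_mul _

lemma memLp_lpDual [p.HolderConjugate q] {g : α → ℝ} (hp : p ≠ ∞) (hg : MemLp g p μ)
    (hg₀ : eLpNorm g p μ ≠ 0) : MemLp (lpDual p μ g) q μ :=
  ⟨aestronglyMeasurable_lpDual hg.1,
    (eLpNorm_lpDual_le_one hp hg.2.ne hg₀).trans_lt ENNReal.one_lt_top⟩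

lemma eLpNorm_lpDual_eq_one [p.HolderConjugate q] {g : α → ℝ} (hp : p ≠ ∞) (hg : MemLp g p μ)
    (hg₀ : eLpNorm g p μ ≠ 0) : eLpNorm (lpDual p μ g) q μ = 1 := by
  have : q.HolderConjugate p := .symm
  have : Fact (1 ≤ p) := ⟨ENNReal.HolderConjugate.one_le p q⟩
  have : Fact (1 ≤ q) := ⟨ENNReal.HolderConjugate.one_le q p⟩
  have hψ : MemLp (lpDual p μ g) q μ := memLp_lpDual hp hg hg₀
  have hholder : 1 * ‖hg.toLp g‖ ≤ ‖hψ.toLp (lpDual p μ g)‖ * ‖hg.toLp g‖ :=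
    calc 1 * ‖hg.toLp g‖ = ∫ t, lpDual p μ g t * g t ∂μ := by
          rw [integral_lpDual_mul_self (zero_lt_one.trans_le Fact.out).ne' hp hg, one_mul,
            Lp.norm_toLp]
      _ = (ContinuousLinearMap.mul ℝ ℝ).lpPairing μ q p (hψ.toLp _) (hg.toLp g) :=
          (lpPairing_mul_toLp_toLp hψ hg).symm
      _ ≤ ‖hψ.toLp (lpDual p μ g)‖ * ‖hg.toLp g‖ :=
          (Real.le_norm_self _).trans (norm_lpPairing_mul_apply_le _ _)
  have hg_pos : 0 < ‖hg.toLp g‖ := by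
    rw [Lp.norm_toLp]
    exact ENNReal.toReal_pos hg₀ hg.2.ne
  refine (eLpNorm_lpDual_le_one hp hg.2.ne hg₀).antisymm ?_
  rw [← ENNReal.toReal_le_toReal ENNReal.one_ne_top hψ.2.ne, ENNReal.toReal_one,
    ← Lp.norm_toLp _ hψ]
  exact le_of_mul_le_mul_right hholder hg_pos

lemma exists_norm_le_one_apply_eq_integral_lpDual_mul [Fact (1 ≤ p)] [p.HolderConjugate q]
    {g : α → ℝ} (hp : p ≠ ∞) (hg : MemLp g p μ) (hg₀ : eLpNorm g p μ ≠ 0) :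
    ∃ φ : Lp ℝ p μ →L[ℝ] ℝ, ‖φ‖ ≤ 1 ∧
      ∀ h (hh : MemLp h p μ), φ (hh.toLp h) = ∫ t, lpDual p μ g t * h t ∂μ := by
  have : q.HolderConjugate p := .symm
  have : Fact (1 ≤ q) := ⟨ENNReal.HolderConjugate.one_le q p⟩
  have hψ : MemLp (lpDual p μ g) q μ := memLp_lpDual hp hg hg₀
  refine ⟨(ContinuousLinearMap.mul ℝ ℝ).lpPairing μ q p (hψ.toLp _), ?_,
    fun h hh ↦ lpPairing_mul_toLp_toLp hψ hh⟩
  refine ContinuousLinearMap.opNorm_le_bound _ zero_le_one fun h ↦ ?_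
  calc _ ≤ ‖hψ.toLp (lpDual p μ g)‖ * ‖h‖ := norm_lpPairing_mul_apply_le _ h
    _ ≤ 1 * ‖h‖ := by
        rw [Lp.norm_toLp, eLpNorm_lpDual_eq_one hp hg hg₀, ENNReal.toReal_one]

end LpFunctional

section Selection

variable {ι Ω : Type*} {m : MeasurableSpace Ω} {P : Measure Ω}

lemma integral_le_add_mul_measureReal [IsProbabilityMeasure P] {X : Ω → ℝ} {U : Set Ω} {C B : ℝ}
    (hX : Integrable X P) (hC : 0 ≤ C) (hXC : ∀ ω ∉ U, X ω ≤ C) (hXB : ∀ ω, X ω ≤ B) :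
    ∫ ω, X ω ∂P ≤ C + B * P.real U := by
  set V := toMeasurable P U with hV
  have hVm : MeasurableSet V := measurableSet_toMeasurable P U
  have hbound : ∀ ω, X ω ≤ C + V.indicator (fun _ ↦ B) ω := fun ω ↦ by
    by_cases hω : ω ∈ V
    · rw [Set.indicator_of_mem hω]
      linarith [hXB ω]
    · rw [Set.indicator_of_notMem hω, add_zero]
      exact hXC ω fun hU ↦ hω (subset_toMeasurable P U hU)
  have hind : Integrable (V.indicator fun _ ↦ B) P := (integrable_const B).indicator hVm
  calc ∫ ω, X ω ∂P ≤ ∫ ω, (C + V.indicator (fun _ ↦ B) ω) ∂P :=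
        integral_mono hX ((integrable_const C).add hind) hbound
    _ = C + B * P.real U := by
      rw [integral_add (integrable_const C) hind, integral_indicator_const B hVm, hV,
        Measure.real, measure_toMeasurable]
      simp [Measure.real, mul_comm]

lemma integrable_comp_of_finite [IsFiniteMeasure P] [Finite ι] [MeasurableSpace ι]
    [DiscreteMeasurableSpace ι] {s : Ω → ι} (hs : Measurable s) (g : ι → ℝ) :
    Integrable (fun ω ↦ g (s ω)) P :=
  (Integrable.of_finite (f := g)).comp_measurable hs

end Selection

section DualCriterion

variable {E ι K Ω : Type*} [SeminormedAddCommGroup E] [NormedSpace ℝ E]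

/-- The empirical distance `sup_k (|φ k v + η k| - τ k)` of `v` to the origin, as seen by the probe
functionals `φ k` observed with noise `η k`, each discounted by its threshold `τ k`. A minimum
distance procedure selects the candidate `y` minimizing it at `v = x - y`. The supremum is `0` when
there are no probes. -/
noncomputable def dualCriterion (φ : K → E →L[ℝ] ℝ) (η τ : K → ℝ) (v : E) : ℝ :=
  ⨆ k, (|φ k v + η k| - τ k)

variable {φ : K → E →L[ℝ] ℝ} {η τ : K → ℝ}

lemma dualCriterion_le_norm (hφ : ∀ k, ‖φ k‖ ≤ 1) (hη : ∀ k, |η k| ≤ τ k) (v : E) :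
    dualCriterion φ η τ v ≤ ‖v‖ := by
  refine Real.iSup_le (fun k ↦ ?_) (norm_nonneg v)
  have hφv : |φ k v| ≤ ‖v‖ := by simpa using (φ k).le_of_opNorm_le (hφ k) v
  linarith [abs_add_le (φ k v) (η k), hη k]

lemma norm_sub_le_of_dualCriterion_le [Finite K] (hφ : ∀ k, ‖φ k‖ ≤ 1)
    (hη : ∀ k, |η k| ≤ τ k) {x y z : E}
    (hmin : dualCriterion φ η τ (x - z) ≤ dualCriterion φ η τ (x - y))
    {k : K} (hk : φ k (y - z) = ‖y - z‖) :
    ‖z - x‖ ≤ 3 * ‖x - y‖ + 2 * τ k := by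
  have hφy : |φ k (x - y)| ≤ ‖x - y‖ := by simpa using (φ k).le_of_opNorm_le (hφ k) (x - y)
  have hφz : |φ k (x - z) + η k| - τ k ≤ ‖x - y‖ :=
    calc |φ k (x - z) + η k| - τ k
        ≤ dualCriterion φ η τ (x - z) :=
          le_ciSup (f := fun k ↦ |φ k (x - z) + η k| - τ k) (Set.finite_range _).bddAbove k
      _ ≤ dualCriterion φ η τ (x - y) := hmin
      _ ≤ ‖x - y‖ := dualCriterion_le_norm hφ hη _
  have hyz : ‖y - z‖ = φ k (x - z) - φ k (x - y) := by
    rw [← hk, ← map_sub, sub_sub_sub_cancel_left]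
  calc ‖z - x‖ = ‖x - z‖ := norm_sub_rev z x
    _ ≤ ‖x - y‖ + ‖y - z‖ := norm_sub_le_norm_sub_add_norm_sub x y z
    _ ≤ 3 * ‖x - y‖ + 2 * τ k := by
      linarith [neg_le_of_abs_le hφy, neg_le_of_abs_le (hη k), le_abs_self (φ k (x - z) + η k)]

variable {m : MeasurableSpace Ω} {P : Measure Ω}

theorem integral_norm_selected_sub_le [IsProbabilityMeasure P] [Finite K] [Finite ι]
    [MeasurableSpace ι] [DiscreteMeasurableSpace ι] {ζ : K → Ω → ℝ} (hφ : ∀ k, ‖φ k‖ ≤ 1)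
    {x : E} {y : ι → E} {i₀ : ι} {T B δ : ℝ} (hT : 0 ≤ T)
    (hφy : ∀ i ≠ i₀, ∃ k, φ k (y i₀ - y i) = ‖y i₀ - y i‖ ∧ τ k ≤ T)
    (hB : ∀ i, ‖y i - x‖ ≤ B) (hδ : P.real {ω | ∃ k, τ k < |ζ k ω|} ≤ δ)
    {s : Ω → ι} (hs : Measurable s)
    (hmin : ∀ ω, dualCriterion φ (ζ · ω) τ (x - y (s ω)) ≤ dualCriterion φ (ζ · ω) τ (x - y i₀)) :
    ∫ ω, ‖y (s ω) - x‖ ∂P ≤ 3 * ‖x - y i₀‖ + 2 * T + B * δ := by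
  have hgood : ∀ ω ∉ {ω | ∃ k, τ k < |ζ k ω|}, ‖y (s ω) - x‖ ≤ 3 * ‖x - y i₀‖ + 2 * T := by
    intro ω hω
    have hζ : ∀ k, |ζ k ω| ≤ τ k := by simpa using hω
    rcases eq_or_ne (s ω) i₀ with hsω | hsω
    · rw [hsω, norm_sub_rev]
      linarith [norm_nonneg (x - y i₀)]
    · obtain ⟨k, hk, hkT⟩ := hφy _ hsω
      linarith [norm_sub_le_of_dualCriterion_le hφ hζ (hmin ω) hk]
  have hB₀ : 0 ≤ B := (norm_nonneg _).trans (hB i₀)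
  calc ∫ ω, ‖y (s ω) - x‖ ∂P
      ≤ 3 * ‖x - y i₀‖ + 2 * T + B * P.real {ω | ∃ k, τ k < |ζ k ω|} :=
        integral_le_add_mul_measureReal (integrable_comp_of_finite hs fun i ↦ ‖y i - x‖)
          (by positivity) hgood fun ω ↦ hB (s ω)
    _ ≤ 3 * ‖x - y i₀‖ + 2 * T + B * δ := by gcongr

end DualCriterion

section Subgaussian

variable {Ω K : Type*} {m : MeasurableSpace Ω} {P : Measure Ω}

lemma exp_neg_sq_sqrt_two_mul_log_div_two_le {x : ℝ} (hx : 0 < x) :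
    Real.exp (-√(2 * Real.log x) ^ 2 / 2) ≤ x⁻¹ := by
  rw [← Real.exp_log (inv_pos.2 hx), Real.log_inv, Real.exp_le_exp, Real.sq_sqrt']
  linarith [le_max_left (2 * Real.log x) 0]

lemma hasSubgaussianMGF_of_map_eq_gaussianReal {X : Ω → ℝ} {v : ℝ≥0}
    (hX : P.map X = gaussianReal 0 v) : HasSubgaussianMGF X v P where
  integrable_exp_mul t := by
    have hXm : AEMeasurable X P := by
      have : NeZero (P.map X) := by rw [hX]; infer_instance
      exact aemeasurable_of_map_neZero this
    exact (hX ▸ integrable_exp_mul_gaussianReal t).comp_aemeasurable hXm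
  mgf_le t := by simp [mgf_gaussianReal hX]

lemma measureReal_mul_lt_le_exp [IsFiniteMeasure P] {X : Ω → ℝ} {σ : ℝ≥0}
    (hX : HasSubgaussianMGF X (σ ^ 2) P) {t : ℝ} (ht : 0 ≤ t) :
    P.real {ω | t * σ < X ω} ≤ Real.exp (-t ^ 2 / 2) := by
  rcases eq_or_ne σ 0 with rfl | hσ
  · have hX₀ : X =ᵐ[P] 0 := by
      simpa using HasSubgaussianMGF.ae_eq_zero_of_hasSubgaussianMGF_zero (by simpa using hX)
    have hnull : P {ω | t * (0 : ℝ≥0) < X ω} = 0 := by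
      rw [measure_eq_zero_iff_ae_notMem]
      filter_upwards [hX₀] with ω hω
      simp [hω]
    rw [Measure.real, hnull]
    positivity
  · calc P.real {ω | t * σ < X ω} ≤ P.real {ω | t * σ ≤ X ω} :=
          measureReal_mono fun ω (hω : t * σ < X ω) ↦ show t * σ ≤ X ω from hω.le
      _ ≤ Real.exp (-(t * σ) ^ 2 / (2 * ↑(σ ^ 2))) := hX.measure_ge_le (by positivity)
      _ = Real.exp (-t ^ 2 / 2) := by
        congr 1
        have : (σ : ℝ) ≠ 0 := by exact_mod_cast hσ
        push_cast
        field_simp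

theorem measureReal_exists_mul_lt_abs_le_exp [Fintype K] [IsFiniteMeasure P] {X : K → Ω → ℝ}
    {σ : K → ℝ≥0} (hX : ∀ k, HasSubgaussianMGF (X k) (σ k ^ 2) P) (r : K → K)
    (hXr : ∀ k, X (r k) =ᵐ[P] -X k) (hσr : ∀ k, σ (r k) = σ k) {t : ℝ} (ht : 0 ≤ t) :
    P.real {ω | ∃ k, t * σ k < |X k ω|} ≤ Fintype.card K * Real.exp (-t ^ 2 / 2) := by
  have hsub : {ω | ∃ k, t * σ k < |X k ω|} ≤ᵐ[P] (⋃ k, {ω | t * σ k < X k ω} : Set Ω) := by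
    filter_upwards [ae_all_iff.2 hXr] with ω hω ⟨k, hk⟩
    rcases lt_abs.1 hk with hk | hk
    · exact Set.mem_iUnion.2 ⟨k, hk⟩
    · refine Set.mem_iUnion.2 ⟨r k, ?_⟩
      simpa [hω k, hσr k] using hk
  calc P.real {ω | ∃ k, t * σ k < |X k ω|}
      ≤ P.real (⋃ k, {ω | t * σ k < X k ω}) :=
        ENNReal.toReal_mono (measure_ne_top P _) (measure_mono_ae hsub)
    _ ≤ ∑ k, P.real {ω | t * σ k < X k ω} := measureReal_iUnion_fintype_le _
    _ ≤ ∑ _k : K, Real.exp (-t ^ 2 / 2) :=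
        Finset.sum_le_sum fun k _ ↦ measureReal_mul_lt_le_exp (hX k) ht
    _ = Fintype.card K * Real.exp (-t ^ 2 / 2) := by simp

theorem measureReal_exists_pair_lt_abs_le {ι : Type*} [Fintype ι] [Nonempty ι] [IsFiniteMeasure P]
    {Z : ι → ι → Ω → ℝ} {σ : ι → ι → ℝ≥0}
    (hZ : ∀ i j, i ≠ j → HasSubgaussianMGF (Z i j) (σ i j ^ 2) P)
    (hZanti : ∀ i j, i ≠ j → Z j i =ᵐ[P] -Z i j) (hσ : ∀ i j, i ≠ j → σ j i = σ i j)
    {ε : ℝ} (hε : 0 < ε) :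
    P.real {ω | ∃ k : {k : ι × ι // k.1 ≠ k.2},
      √(2 * Real.log ((Fintype.card ι : ℝ) ^ 2 / ε)) * σ k.1.1 k.1.2 < |Z k.1.1 k.1.2 ω|} ≤ ε := by
  classical
  have : 0 < (Fintype.card ι : ℝ) := by exact_mod_cast Fintype.card_pos
  have hcard : (Fintype.card {k : ι × ι // k.1 ≠ k.2} : ℝ) ≤ (Fintype.card ι : ℝ) ^ 2 := by
    rw [sq, ← Nat.cast_mul, ← Fintype.card_prod]
    exact_mod_cast Fintype.card_subtype_le _
  calc P.real {ω | ∃ k : {k : ι × ι // k.1 ≠ k.2},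
        √(2 * Real.log ((Fintype.card ι : ℝ) ^ 2 / ε)) * σ k.1.1 k.1.2 < |Z k.1.1 k.1.2 ω|}
      ≤ Fintype.card {k : ι × ι // k.1 ≠ k.2} *
          Real.exp (-√(2 * Real.log ((Fintype.card ι : ℝ) ^ 2 / ε)) ^ 2 / 2) :=
        measureReal_exists_mul_lt_abs_le_exp (X := fun k : {k : ι × ι // k.1 ≠ k.2} ↦ Z k.1.1 k.1.2)
          (fun k ↦ hZ _ _ k.2) (fun k ↦ ⟨k.1.swap, k.2.symm⟩) (fun k ↦ hZanti _ _ k.2)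
          (fun k ↦ hσ _ _ k.2) (Real.sqrt_nonneg _)
    _ ≤ (Fintype.card ι : ℝ) ^ 2 * ((Fintype.card ι : ℝ) ^ 2 / ε)⁻¹ := by
        gcongr
        exact exp_neg_sq_sqrt_two_mul_log_div_two_le (by positivity)
    _ = ε := by field_simp

end Subgaussian

section Aggregation

variable {α ι Ω : Type*} {mα : MeasurableSpace α} {μ : Measure α} {p q : ℝ≥0∞}
  [MeasurableSpace ι] [DiscreteMeasurableSpace ι] {m : MeasurableSpace Ω} {P : Measure Ω}
  [IsProbabilityMeasure P]

theorem integral_toReal_eLpNorm_selected_sub_le [Finite ι] [p.HolderConjugate q] (hp : p ≠ ∞)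
    {f : α → ℝ} {F : ι → α → ℝ} (hf : MemLp f p μ) (hF : ∀ i, MemLp (F i) p μ)
    (hF₀ : ∀ i j, i ≠ j → eLpNorm (F i - F j) p μ ≠ 0) {L : ℝ}
    (hfL : (eLpNorm f p μ).toReal ≤ L) (hFL : ∀ i, (eLpNorm (F i) p μ).toReal ≤ L)
    {ζ : {k : ι × ι // k.1 ≠ k.2} → Ω → ℝ} {τ : {k : ι × ι // k.1 ≠ k.2} → ℝ} {δ : ℝ}
    (hδ : P.real {ω | ∃ k, τ k < |ζ k ω|} ≤ δ) {M : ι → Ω → ℝ}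
    (hM : ∀ i ω, M i ω = ⨆ k : {k : ι × ι // k.1 ≠ k.2},
      (|(∫ t, lpDual p μ (F k.1.1 - F k.1.2) t * (f t - F i t) ∂μ) + ζ k ω| - τ k))
    {s : Ω → ι} (hs : Measurable s) {i₀ : ι} (hmin : ∀ ω, M (s ω) ω ≤ M i₀ ω) {T : ℝ}
    (hT : 0 ≤ T) (hτ : ∀ i (hi : i₀ ≠ i), τ ⟨(i₀, i), hi⟩ ≤ T) :
    ∫ ω, (eLpNorm (F (s ω) - f) p μ).toReal ∂P ≤
      3 * (eLpNorm (f - F i₀) p μ).toReal + 2 * T + 2 * L * δ := by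
  have : Fact (1 ≤ p) := ⟨ENNReal.HolderConjugate.one_le p q⟩
  choose φ hφ hφ_apply using fun k : {k : ι × ι // k.1 ≠ k.2} ↦
    exists_norm_le_one_apply_eq_integral_lpDual_mul (q := q) hp ((hF k.1.1).sub (hF k.1.2))
      (hF₀ _ _ k.2)
  set x : Lp ℝ p μ := hf.toLp f with hx
  set y : ι → Lp ℝ p μ := fun i ↦ (hF i).toLp (F i) with hy
  have hM_eq : ∀ i ω, M i ω = dualCriterion φ (ζ · ω) τ (x - y i) := fun i ω ↦ by
    simp only [hM, dualCriterion, hx, hy, ← MemLp.toLp_sub, hφ_apply, Pi.sub_apply]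
  have hyx : ∀ i, ‖y i - x‖ = (eLpNorm (F i - f) p μ).toReal := fun i ↦ by
    rw [← MemLp.toLp_sub, Lp.norm_toLp]
  have hsep : ∀ i (hi : i₀ ≠ i), φ ⟨(i₀, i), hi⟩ (y i₀ - y i) = ‖y i₀ - y i‖ := fun i hi ↦ by
    rw [← MemLp.toLp_sub, hφ_apply, Lp.norm_toLp]
    exact integral_lpDual_mul_self (zero_lt_one.trans_le Fact.out).ne' hp ((hF i₀).sub (hF i))
  have hB : ∀ i, ‖y i - x‖ ≤ 2 * L := fun i ↦ by
    have hyL : ‖y i‖ ≤ L := (Lp.norm_toLp _ _).trans_le (hFL i)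
    have hxL : ‖x‖ ≤ L := (Lp.norm_toLp _ _).trans_le hfL
    linarith [norm_sub_le (y i) x]
  simp_rw [← hyx]
  rw [← Lp.norm_toLp (f - F i₀) (hf.sub (hF i₀)), MemLp.toLp_sub]
  exact integral_norm_selected_sub_le hφ hT
    (fun i hi ↦ ⟨⟨(i₀, i), hi.symm⟩, hsep i hi.symm, hτ i hi.symm⟩) hB hδ hs
    fun ω ↦ by simpa only [hM_eq] using hmin ω

theorem stmt_3_general [Fintype ι] [IsProbabilityMeasure μ] [p.HolderConjugate q] (hp : p ≠ ∞)
    {f : α → ℝ} {F : ι → α → ℝ} (hf : MemLp f p μ) (hF : ∀ i, MemLp (F i) p μ)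
    (hF₀ : ∀ i j, i ≠ j → eLpNorm (F i - F j) p μ ≠ 0) {L : ℝ}
    (hfL : (eLpNorm f p μ).toReal ≤ L) (hFL : ∀ i, (eLpNorm (F i) p μ).toReal ≤ L)
    {ε : ℝ} (hε : 0 < ε) {ψ : ι → ι → α → ℝ}
    (hψ : ∀ i j, i ≠ j → ψ i j = lpDual p μ (F i - F j))
    {σ : ι → ι → ℝ≥0} (hσ : ∀ i j, i ≠ j → eLpNorm (ψ i j) 2 μ = σ i j)
    {Z : ι → ι → Ω → ℝ} (hZ : ∀ i j, i ≠ j → HasSubgaussianMGF (Z i j) (σ i j ^ 2) P)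
    (hZanti : ∀ i j, i ≠ j → Z j i =ᵐ[P] -Z i j)
    {κ : ℝ} (hκ : κ = √(2 * Real.log ((Fintype.card ι : ℝ) ^ 2 / ε)))
    {M : ι → Ω → ℝ}
    (hM : ∀ i ω, M i ω = ⨆ k : {k : ι × ι // k.1 ≠ k.2},
      (|(∫ t, ψ k.1.1 k.1.2 t * (f t - F i t) ∂μ) + ε * Z k.1.1 k.1.2 ω| - ε * κ * σ k.1.1 k.1.2) /
        (eLpNorm (ψ k.1.1 k.1.2) q μ).toReal)
    {s : Ω → ι} (hs : Measurable s) (hmin : ∀ ω i, M (s ω) ω ≤ M i ω) {i₀ : ι}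
    (hi₀ : ∀ i, (eLpNorm (f - F i₀) p μ).toReal ≤ (eLpNorm (f - F i) p μ).toReal) {Q : ℝ}
    (hQ₁ : p ≤ 2 → Q = 1)
    (hQ₂ : 2 < p → Q = ⨆ j : {j : ι // j ≠ i₀}, ((eLpNorm (F i₀ - F j.1) (2 * p - 2) μ).toReal /
      (eLpNorm (F i₀ - F j.1) p μ).toReal) ^ (p.toReal - 1)) :
    ∫ ω, (eLpNorm (F (s ω) - f) p μ).toReal ∂P ≤
      3 * (⨅ i, (eLpNorm (f - F i) p μ).toReal) +
        2 * Q * ε * √(2 * Real.log ((Fintype.card ι : ℝ) ^ 2 / ε)) + 2 * L * ε := by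
  have : Nonempty ι := ⟨i₀⟩
  have hFF : ∀ i j, MemLp (F i - F j) p μ := fun i j ↦ (hF i).sub (hF j)
  have hσ_symm : ∀ i j, i ≠ j → σ j i = σ i j := fun i j hij ↦ by
    rw [← ENNReal.coe_inj, ← hσ i j hij, ← hσ j i hij.symm, hψ i j hij, hψ j i hij.symm,
      eLpNorm_lpDual_sub_comm]
  have hQ₀ : 0 ≤ Q := by
    rcases le_or_gt p 2 with hp₂ | hp₂
    · simp [hQ₁ hp₂]
    · exact hQ₂ hp₂ ▸ Real.iSup_nonneg fun j ↦ by positivity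
  have hσQ : ∀ i, i₀ ≠ i → σ i₀ i ≤ Q := fun i hi ↦ by
    rw [← ENNReal.coe_toReal, ← hσ i₀ i hi, hψ i₀ i hi]
    refine toReal_eLpNorm_two_lpDual_le (q := q) hp (hFF i₀ i) (hF₀ i₀ i hi)
      (fun hp₂ ↦ (hQ₁ hp₂).ge) fun hp₂ ↦ hQ₂ hp₂ ▸ ?_
    exact le_ciSup (f := fun j : {j : ι // j ≠ i₀} ↦
      ((eLpNorm (F i₀ - F j.1) (2 * p - 2) μ).toReal /
        (eLpNorm (F i₀ - F j.1) p μ).toReal) ^ (p.toReal - 1))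
      (Set.finite_range _).bddAbove ⟨i, hi.symm⟩
  have hδ : P.real {ω | ∃ k : {k : ι × ι // k.1 ≠ k.2},
      ε * κ * σ k.1.1 k.1.2 < |ε * Z k.1.1 k.1.2 ω|} ≤ ε := by
    simpa only [abs_mul, abs_of_pos hε, mul_assoc, mul_lt_mul_iff_right₀ hε, hκ] using
      measureReal_exists_pair_lt_abs_le hZ hZanti hσ_symm hε
  have hM' : ∀ i ω, M i ω = ⨆ k : {k : ι × ι // k.1 ≠ k.2},
      (|(∫ t, lpDual p μ (F k.1.1 - F k.1.2) t * (f t - F i t) ∂μ) + ε * Z k.1.1 k.1.2 ω| -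
        ε * κ * σ k.1.1 k.1.2) := fun i ω ↦ (hM i ω).trans <| iSup_congr fun k ↦ by
    rw [hψ _ _ k.2, eLpNorm_lpDual_eq_one hp (hFF _ _) (hF₀ _ _ k.2), ENNReal.toReal_one, div_one]
  have hκ₀ : 0 ≤ κ := hκ ▸ Real.sqrt_nonneg _
  have hinf : (eLpNorm (f - F i₀) p μ).toReal ≤ ⨅ i, (eLpNorm (f - F i) p μ).toReal :=
    le_ciInf hi₀
  rw [← hκ]
  calc ∫ ω, (eLpNorm (F (s ω) - f) p μ).toReal ∂P
      ≤ 3 * (eLpNorm (f - F i₀) p μ).toReal + 2 * (ε * κ * Q) + 2 * L * ε :=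
        integral_toReal_eLpNorm_selected_sub_le (q := q) hp hf hF hF₀ hfL hFL hδ hM' hs (hmin · i₀)
          (by positivity) fun i hi ↦ by gcongr; exact hσQ i hi
    _ ≤ 3 * (⨅ i, (eLpNorm (f - F i) p μ).toReal) + 2 * Q * ε * κ + 2 * L * ε := by
        linarith

end Aggregation

lemma isProbabilityMeasure_cubeMeasure (d : ℕ) : IsProbabilityMeasure (cubeMeasure d) :=
  ⟨by simp [cubeMeasure, Real.volume_Icc_pi]⟩

/-- Corollary 1 of the paper: oracle inequality for the aggregation
procedure with the `(0,p)`-good probe set `Ψ̃` of `L^p`-duality representers,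
`δ = ε` and `κ = √(2 ln(N²/ε))`. -/
theorem stmt_3
    {d N : ℕ} (hd : 1 ≤ d) (hN : 2 ≤ N)
    (p q : ℝ≥0∞) (hp : 1 ≤ p) (hp' : p ≠ ⊤) (hpq : 1 / p + 1 / q = 1)
    (f : (Fin d → ℝ) → ℝ) (F : Fin N → (Fin d → ℝ) → ℝ)
    (hfm : Measurable f) (hFm : ∀ i, Measurable (F i))
    (hf : eLpNorm f p (cubeMeasure d) ≠ ⊤)
    (hF : ∀ i, eLpNorm (F i) p (cubeMeasure d) ≠ ⊤)
    -- the `f_i` are pairwise distinct, and their pairwise differences have finite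
    -- `L^{2p-2}` norms
    (hFdist : ∀ i j, i ≠ j → 0 < Lnorm p (fun t => F i t - F j t))
    (hdiff : ∀ i j, i ≠ j →
      eLpNorm (fun t => F i t - F j t) (2 * p - 2) (cubeMeasure d) ≠ ⊤)
    (L : ℝ) (hL : L = max (Lnorm p f) (⨆ i, Lnorm p (F i)))
    (ε : ℝ) (hε0 : 0 < ε) (hε1 : ε < 1)
    -- the probe functions `ψ_{ij} = |f_i - f_j|^{p-1} sign(f_i - f_j) / ‖f_i - f_j‖_p^{p-1}`
    (ψ : Fin N → Fin N → (Fin d → ℝ) → ℝ)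
    (hψdef : ∀ i j, i ≠ j → ∀ t, ψ i j t =
      |F i t - F j t| ^ (p.toReal - 1) * Real.sign (F i t - F j t) /
        Lnorm p (fun u => F i u - F j u) ^ (p.toReal - 1))
    -- the Gaussian noise functionals
    {Ω : Type} [MeasurableSpace Ω] (P : Measure Ω) [IsProbabilityMeasure P]
    (Z : Fin N → Fin N → Ω → ℝ) (hZm : ∀ i j, Measurable (Z i j))
    (hZlaw : ∀ i j, i ≠ j → Measure.map (Z i j) P =
      ProbabilityTheory.gaussianReal 0 ((eLpNorm (ψ i j) 2 (cubeMeasure d)).toNNReal ^ 2))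
    (hZanti : ∀ i j, i ≠ j → ∀ᵐ ω ∂P, Z j i ω = - Z i j ω)
    -- the selection procedure with `κ = √(2 ln(N²/ε))`
    (κ : ℝ) (hκ : κ = Real.sqrt (2 * Real.log ((N : ℝ) ^ 2 / ε)))
    (Mhat : Fin N → Ω → ℝ)
    (hM : ∀ i ω, Mhat i ω =
      ⨆ jl : {jl : Fin N × Fin N // jl.1 ≠ jl.2},
        (|(∫ t, ψ jl.1.1 jl.1.2 t * (f t - F i t) ∂(cubeMeasure d)) +
            ε * Z jl.1.1 jl.1.2 ω| - ε * κ * Lnorm 2 (ψ jl.1.1 jl.1.2)) /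
          Lnorm q (ψ jl.1.1 jl.1.2))
    (ihat : Ω → Fin N) (hihatm : Measurable ihat)
    (hmin : ∀ ω i, Mhat (ihat ω) ω ≤ Mhat i ω)
    (istar : Fin N)
    (histar : ∀ i, Lnorm p (fun t => f t - F istar t) ≤ Lnorm p (fun t => f t - F i t))
    -- the constant `Q₁(p)`
    (Q1 : ℝ)
    (hQ1a : p ≤ 2 → Q1 = 1)
    (hQ1b : 2 < p → Q1 =
      ⨆ j : {j : Fin N // j ≠ istar},
        (Lnorm (2 * p - 2) (fun t => F istar t - F j.1 t) /
          Lnorm p (fun t => F istar t - F j.1 t)) ^ (p.toReal - 1)) :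
    ∫ ω, Lnorm p (fun t => F (ihat ω) t - f t) ∂P ≤
      3 * (⨅ i, Lnorm p (fun t => f t - F i t))
        + 2 * Q1 * ε * Real.sqrt (2 * Real.log ((N : ℝ) ^ 2 / ε))
        + 2 * L * ε := by
  have := isProbabilityMeasure_cubeMeasure d
  have : p.HolderConjugate q := ENNReal.holderConjugate_iff.2 (by simpa using hpq)
  have hFp : ∀ i, MemLp (F i) p (cubeMeasure d) := fun i ↦
    ⟨(hFm i).aestronglyMeasurable, (hF i).lt_top⟩
  have hF₀ : ∀ i j, i ≠ j → eLpNorm (F i - F j) p (cubeMeasure d) ≠ 0 := fun i j hij ↦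
    (ENNReal.toReal_pos_iff.1 (hFdist i j hij)).1.ne'
  have hψ : ∀ i j, i ≠ j → ψ i j = lpDual p (cubeMeasure d) (F i - F j) := fun i j hij ↦
    funext (hψdef i j hij)
  have hψ₂ : ∀ i j, i ≠ j → eLpNorm (ψ i j) 2 (cubeMeasure d) ≠ ∞ := fun i j hij ↦
    hψ i j hij ▸ eLpNorm_two_lpDual_ne_top (q := q) hp' ((hFp i).sub (hFp j)) (hF₀ i j hij)
      (hdiff i j hij)
  rw [← congrArg Nat.cast (Fintype.card_fin N)] at hκ ⊢
  exact stmt_3_general hp' ⟨hfm.aestronglyMeasurable, hf.lt_top⟩ hFp hF₀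
    (hL ▸ le_max_left _ _)
    (fun i ↦ hL ▸ (le_ciSup (f := fun i ↦ Lnorm p (F i)) (Set.finite_range _).bddAbove i).trans
      (le_max_right _ _)) hε0 hψ (fun i j hij ↦ (ENNReal.coe_toNNReal (hψ₂ i j hij)).symm)
    (fun i j hij ↦ hasSubgaussianMGF_of_map_eq_gaussianReal (hZlaw i j hij)) hZanti hκ hM hihatm
    hmin histar hQ1a hQ1b
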